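/- arXiv:2507.22658 — 2 statements merged into one kernel-verified Lean document; each statement's English description precedes it below -/
import Mathlib

section
/- For every distortion function η there exists a distortion function η̃ depending only on η (one may take η̃(t) = η₂(η(η₁⁻¹(2t))) with η₁(t) = (1/3)·min{t,√t} and η₂(t) = 3·max{t,√t}) such that the following holds: for every η-quasi-Möbius homeomorphism f : X → Y between metric spaces and every pair of disjoint nondegenerate continua E, F ⊆ X, one has Δ(f(E), f(F)) ≤ η̃(Δ(E, F)). -/
open Metric Set

universe u v

/-- A distortion function: a homeomorphism of `[0,∞)` onto itself. -/
def IsDistortionFunction (η : ℝ → ℝ) : Prop :=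
  η 0 = 0 ∧ StrictMonoOn η (Ici 0) ∧ ContinuousOn η (Ici 0) ∧ SurjOn η (Ici 0) (Ici 0)

/-- The metric cross ratio `[a,b,c,d] = (d(a,c)·d(b,d))/(d(a,d)·d(b,c))`. -/
noncomputable def crossRatio {X : Type*} [MetricSpace X] (a b c d : X) : ℝ :=
  (dist a c * dist b d) / (dist a d * dist b c)

/-- The distance between two sets: `dist(E,F) = inf { d(x,y) : x ∈ E, y ∈ F }`. -/
noncomputable def setDist {X : Type*} [MetricSpace X] (E F : Set X) : ℝ :=
  sInf (Set.image2 dist E F)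

/-- The relative distance `Δ(E,F) = dist(E,F) / min{diam E, diam F}`. -/
noncomputable def relDist {X : Type*} [MetricSpace X] (E F : Set X) : ℝ :=
  setDist E F / min (diam E) (diam F)

/-!
Besides the cross ratio `[a,b,c,d]`, consider the quotient
`⟨a,b,c,d⟩ = min{d(a,c), d(b,d)} / min{d(a,d), d(b,c)}`. By the triangle inequality the two control
each other: `η₁([a,b,c,d]) ≤ ⟨a,b,c,d⟩ ≤ η₂([a,b,c,d])` with `η₁(t) = (1/3) min{t,√t}` and
`η₂(t) = 3 max{t,√t}`, the first bound being the second one with `c` and `d` exchanged.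
A quasi-Möbius map therefore distorts `⟨a,b,c,d⟩` by at most `η₂ ∘ η ∘ η₁⁻¹`.
On the other hand `Δ(E,F)` is at most `⟨a,d,c,b⟩` for all `a ≠ b` in `E` and `c ≠ d` in `F`, and
when `a`, `c` realise `dist(E,F)` and `b`, `d` are farthest from them, `⟨a,d,c,b⟩ ≤ 2 Δ(E,F)`.
-/

namespace IsDistortionFunction

theorem mapsTo {g : ℝ → ℝ} (hg : IsDistortionFunction g) : MapsTo g (Ici 0) (Ici 0) := by
  intro x hx
  simpa only [hg.1, mem_Ici] using hg.2.1.monotoneOn self_mem_Ici hx hx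

theorem comp {f g : ℝ → ℝ} (hf : IsDistortionFunction f) (hg : IsDistortionFunction g) :
    IsDistortionFunction (f ∘ g) := by
  have hmaps := hg.mapsTo
  obtain ⟨hf_zero, hf_mono, hf_cont, hf_surj⟩ := hf
  obtain ⟨hg_zero, hg_mono, hg_cont, hg_surj⟩ := hg
  exact ⟨by rw [Function.comp_apply, hg_zero, hf_zero], hf_mono.comp hg_mono hmaps,
    hf_cont.comp hg_cont hmaps, hf_surj.comp hg_surj⟩

theorem of_self_le {g : ℝ → ℝ} (h_zero : g 0 = 0) (h_mono : StrictMonoOn g (Ici 0))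
    (h_cont : ContinuousOn g (Ici 0)) (h_le : ∀ t, 0 ≤ t → t ≤ g t) :
    IsDistortionFunction g := by
  refine ⟨h_zero, h_mono, h_cont, fun y hy => ?_⟩
  have h_image : y ∈ g '' Icc 0 y :=
    intermediate_value_Icc hy (h_cont.mono Icc_subset_Ici_self) ⟨h_zero.trans_le hy, h_le y hy⟩
  exact image_mono Icc_subset_Ici_self h_image

theorem const_mul {k : ℝ} (hk : 0 < k) : IsDistortionFunction (k * ·) :=
  ⟨mul_zero k, (strictMono_mul_left_of_pos hk).strictMonoOn _, by fun_prop,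
    fun y hy => ⟨y / k, div_nonneg hy hk.le, mul_div_cancel₀ y hk.ne'⟩⟩

end IsDistortionFunction

/-- The function `η₂(t) = 3 max{t, √t}`, which bounds `minCrossRatio` in terms of `crossRatio`. -/
noncomputable def upperGauge (t : ℝ) : ℝ :=
  3 * max t √t

/-- The inverse on `[0,∞)` of `η₁(t) = (1/3) min{t, √t}`, which bounds `crossRatio` in terms of
`minCrossRatio`. -/
def lowerGaugeInv (s : ℝ) : ℝ :=
  max (3 * s) ((3 * s) ^ 2)

theorem monotone_upperGauge : Monotone upperGauge := fun s t hst => by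
  unfold upperGauge
  gcongr

theorem isDistortionFunction_upperGauge : IsDistortionFunction upperGauge := by
  refine .of_self_le (by simp [upperGauge]) (fun s hs t _ hst => ?_) ?_ (fun t ht => ?_)
  · have h_sqrt : √s < √t := Real.sqrt_lt_sqrt hs hst
    exact mul_lt_mul_of_pos_left (max_lt_max hst h_sqrt) three_pos
  · unfold upperGauge
    fun_prop
  · have h_max : t ≤ max t √t := le_max_left _ _
    unfold upperGauge
    linarith

theorem isDistortionFunction_lowerGaugeInv : IsDistortionFunction lowerGaugeInv := by
  refine .of_self_le (by simp [lowerGaugeInv]) (fun s hs t _ hst => ?_) ?_ (fun t ht => ?_)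
  · have h_nonneg : 0 ≤ 3 * s := mul_nonneg three_pos.le hs
    have h_lt : 3 * s < 3 * t := by linarith
    exact max_lt_max h_lt (pow_lt_pow_left₀ h_lt h_nonneg two_ne_zero)
  · unfold lowerGaugeInv
    fun_prop
  · exact le_max_of_le_left (by linarith)

theorem div_le_upperGauge {m M n N : ℝ} (hm : 0 ≤ m) (hmM : m ≤ M) (hn : 0 < n) (hnN : n ≤ N)
    (hN : N ≤ 2 * M + n) : m / n ≤ upperGauge (m * M / (n * N)) := by
  have hM : 0 ≤ M := hm.trans hmM
  have hN_pos : 0 < N := hn.trans_le hnN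
  rcases le_total n M with hnM | hMn
  · have h_linear : m / n ≤ 3 * (m * M / (n * N)) := by
      rw [← mul_div_assoc, div_le_div_iff₀ hn (by positivity)]
      calc m * (n * N) ≤ m * (n * (3 * M)) := by gcongr; linarith
        _ = 3 * (m * M) * n := by ring
    exact h_linear.trans (mul_le_mul_of_nonneg_left (le_max_left _ _) three_pos.le)
  · have h_sq : (m / (3 * n)) ^ 2 ≤ m * M / (n * N) := by
      rw [div_pow, div_le_div_iff₀ (by positivity) (by positivity)]
      calc m ^ 2 * (n * N) = m * m * (n * N) := by ring
        _ ≤ m * M * (n * (9 * n)) := by gcongr; linarith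
        _ = m * M * (3 * n) ^ 2 := by ring
    calc m / n = 3 * (m / (3 * n)) := by field_simp
      _ ≤ 3 * √(m * M / (n * N)) := by gcongr; exact Real.le_sqrt_of_sq_le h_sq
      _ ≤ _ := mul_le_mul_of_nonneg_left (le_max_right _ _) three_pos.le

/-- The quotient `⟨a,b,c,d⟩ = min{d(a,c), d(b,d)} / min{d(a,d), d(b,c)}`: the cross ratio with
products replaced by minima. It is the quantity directly comparable to `relDist`. -/
noncomputable def minCrossRatio {X : Type*} [MetricSpace X] (a b c d : X) : ℝ :=
  min (dist a c) (dist b d) / min (dist a d) (dist b c)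

/-- The map `f` distorts the cross ratios of quadruples of distinct points by at most `η`. -/
def IsQuasiMobius {X Y : Type*} [MetricSpace X] [MetricSpace Y] (η : ℝ → ℝ) (f : X → Y) : Prop :=
  ∀ a b c d : X, a ≠ b → a ≠ c → a ≠ d → b ≠ c → b ≠ d → c ≠ d →
    crossRatio (f a) (f b) (f c) (f d) ≤ η (crossRatio a b c d)

section CrossRatio

variable {X : Type*} [MetricSpace X] {a b c d : X}

theorem crossRatio_swap_right (a b c d : X) : crossRatio a b d c = (crossRatio a b c d)⁻¹ :=
  (inv_div _ _).symm

theorem minCrossRatio_swap_right (a b c d : X) :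
    minCrossRatio a b d c = (minCrossRatio a b c d)⁻¹ :=
  (inv_div _ _).symm

theorem crossRatio_nonneg (a b c d : X) : 0 ≤ crossRatio a b c d := by
  unfold crossRatio
  positivity

theorem minCrossRatio_nonneg (a b c d : X) : 0 ≤ minCrossRatio a b c d := by
  unfold minCrossRatio
  positivity

theorem crossRatio_pos (hac : a ≠ c) (had : a ≠ d) (hbc : b ≠ c) (hbd : b ≠ d) :
    0 < crossRatio a b c d :=
  div_pos (mul_pos (dist_pos.2 hac) (dist_pos.2 hbd)) (mul_pos (dist_pos.2 had) (dist_pos.2 hbc))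

theorem minCrossRatio_pos (hac : a ≠ c) (had : a ≠ d) (hbc : b ≠ c) (hbd : b ≠ d) :
    0 < minCrossRatio a b c d :=
  div_pos (lt_min (dist_pos.2 hac) (dist_pos.2 hbd)) (lt_min (dist_pos.2 had) (dist_pos.2 hbc))

theorem max_dist_le_two_mul_max_add_min (a b c d : X) :
    max (dist a d) (dist b c) ≤
      2 * max (dist a c) (dist b d) + min (dist a d) (dist b c) := by
  have h_ad : dist a d ≤ dist a c + dist b c + dist b d := by
    simpa only [dist_comm c b] using dist_triangle4 a c b d
  have h_bc : dist b c ≤ dist b d + dist a d + dist a c := by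
    simpa only [dist_comm d a] using dist_triangle4 b d a c
  have h_ac : dist a c ≤ max (dist a c) (dist b d) := le_max_left _ _
  have h_bd : dist b d ≤ max (dist a c) (dist b d) := le_max_right _ _
  rcases le_total (dist a d) (dist b c) with h | h
  · rw [max_eq_right h, min_eq_left h]
    linarith
  · rw [max_eq_left h, min_eq_right h]
    linarith

theorem minCrossRatio_le_upperGauge (had : a ≠ d) (hbc : b ≠ c) :
    minCrossRatio a b c d ≤ upperGauge (crossRatio a b c d) := by
  rw [minCrossRatio, crossRatio, ← min_mul_max (dist a c), ← min_mul_max (dist a d)]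
  exact div_le_upperGauge (le_min dist_nonneg dist_nonneg) min_le_max
    (lt_min (dist_pos.2 had) (dist_pos.2 hbc)) min_le_max (max_dist_le_two_mul_max_add_min a b c d)

theorem crossRatio_le_lowerGaugeInv (hac : a ≠ c) (had : a ≠ d) (hbc : b ≠ c) (hbd : b ≠ d) :
    crossRatio a b c d ≤ lowerGaugeInv (minCrossRatio a b c d) := by
  have h_swap := minCrossRatio_le_upperGauge hac hbd
  rw [minCrossRatio_swap_right, crossRatio_swap_right, upperGauge, Real.sqrt_inv] at h_swap
  have hr : 0 < crossRatio a b c d := crossRatio_pos hac had hbc hbd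
  have hs : 0 < minCrossRatio a b c d := minCrossRatio_pos hac had hbc hbd
  set r := crossRatio a b c d
  set s := minCrossRatio a b c d
  have le_of_inv_le {x : ℝ} (hx : 0 < x) (h : s⁻¹ ≤ 3 * x⁻¹) : x ≤ 3 * s := by
    rwa [← div_eq_mul_inv, inv_le_comm₀ hs (by positivity), inv_div, div_le_iff₀' three_pos] at h
  rcases max_choice r⁻¹ (√r)⁻¹ with h | h <;> rw [h] at h_swap
  · exact le_max_of_le_left (le_of_inv_le hr h_swap)
  · have h_sqrt : √r ≤ 3 * s := le_of_inv_le (Real.sqrt_pos.2 hr) h_swap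
    exact le_max_of_le_right ((Real.sqrt_le_left (by positivity)).1 h_sqrt)

end CrossRatio

section RelativeDistance

variable {X : Type*} [MetricSpace X] {E F : Set X}

theorem setDist_nonneg (E F : Set X) : 0 ≤ setDist E F :=
  Real.sInf_nonneg (forall_mem_image2.2 fun _ _ _ _ => dist_nonneg)

theorem setDist_le_dist {x y : X} (hx : x ∈ E) (hy : y ∈ F) : setDist E F ≤ dist x y :=
  csInf_le ⟨0, forall_mem_image2.2 fun _ _ _ _ => dist_nonneg⟩ (mem_image2_of_mem hx hy)

theorem exists_dist_eq_setDist (hE : IsCompact E) (hF : IsCompact F) (hE_ne : E.Nonempty)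
    (hF_ne : F.Nonempty) : ∃ a ∈ E, ∃ c ∈ F, dist a c = setDist E F := by
  have h_compact : IsCompact (image2 dist E F) := by
    rw [← image_prod]
    exact (hE.prod hF).image continuous_dist
  exact h_compact.sInf_mem (hE_ne.image2 hF_ne)

theorem exists_diam_le_two_mul_dist (hE : IsCompact E) {a : X} (ha : a ∈ E) :
    ∃ b ∈ E, diam E ≤ 2 * dist a b := by
  obtain ⟨b, hb, hb_max⟩ := hE.exists_isMaxOn ⟨a, ha⟩ (f := (dist · a)) (by fun_prop)
  refine ⟨b, hb, ?_⟩
  rw [dist_comm a b]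
  exact diam_le_of_subset_closedBall dist_nonneg fun x hx => hb_max hx

theorem relDist_le_minCrossRatio (hE : Bornology.IsBounded E) (hF : Bornology.IsBounded F)
    {a b c d : X} (ha : a ∈ E) (hb : b ∈ E) (hc : c ∈ F) (hd : d ∈ F) (hab : a ≠ b)
    (hcd : c ≠ d) : relDist E F ≤ minCrossRatio a d c b := by
  have h_num : setDist E F ≤ min (dist a c) (dist d b) :=
    le_min (setDist_le_dist ha hc) (dist_comm b d ▸ setDist_le_dist hb hd)
  have h_den : min (dist a b) (dist d c) ≤ min (diam E) (diam F) :=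
    min_le_min (dist_le_diam_of_mem hE ha hb) (dist_le_diam_of_mem hF hd hc)
  have h_den_pos : 0 < min (dist a b) (dist d c) :=
    lt_min (dist_pos.2 hab) (dist_pos.2 hcd.symm)
  exact div_le_div₀ ((setDist_nonneg E F).trans h_num) h_num h_den_pos h_den

theorem exists_minCrossRatio_le_two_mul_relDist (hE : IsCompact E) (hE_nt : E.Nontrivial)
    (hF : IsCompact F) (hF_nt : F.Nontrivial) :
    ∃ a ∈ E, ∃ b ∈ E, ∃ c ∈ F, ∃ d ∈ F,
      a ≠ b ∧ c ≠ d ∧ minCrossRatio a d c b ≤ 2 * relDist E F := by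
  obtain ⟨a, ha, c, hc, hac⟩ := exists_dist_eq_setDist hE hF hE_nt.nonempty hF_nt.nonempty
  obtain ⟨b, hb, hab⟩ := exists_diam_le_two_mul_dist hE ha
  obtain ⟨d, hd, hcd⟩ := exists_diam_le_two_mul_dist hF hc
  have hE_pos : 0 < diam E := diam_pos hE_nt hE.isBounded
  have hF_pos : 0 < diam F := diam_pos hF_nt hF.isBounded
  refine ⟨a, ha, b, hb, c, hc, d, hd, dist_pos.1 (by linarith), dist_pos.1 (by linarith), ?_⟩
  have h_den : min (diam E) (diam F) / 2 ≤ min (dist a b) (dist d c) := by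
    rw [dist_comm d c, div_le_iff₀' two_pos, mul_min_of_nonneg _ _ two_pos.le]
    exact min_le_min hab hcd
  calc minCrossRatio a d c b ≤ setDist E F / (min (diam E) (diam F) / 2) :=
        div_le_div₀ (setDist_nonneg E F) ((min_le_left _ _).trans_eq hac) (by positivity) h_den
    _ = 2 * relDist E F := by rw [relDist, div_div_eq_mul_div, mul_div_right_comm, mul_comm]

end RelativeDistance

namespace IsQuasiMobius

variable {X Y : Type*} [MetricSpace X] [MetricSpace Y] {η : ℝ → ℝ} {f : X → Y}

theorem minCrossRatio_le (hf : IsQuasiMobius η f) (hη : MonotoneOn η (Ici 0))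
    (hf_inj : f.Injective) {a b c d : X} (hab : a ≠ b) (hac : a ≠ c) (had : a ≠ d) (hbc : b ≠ c)
    (hbd : b ≠ d) (hcd : c ≠ d) :
    minCrossRatio (f a) (f b) (f c) (f d) ≤
      upperGauge (η (lowerGaugeInv (minCrossRatio a b c d))) := by
  have h_cross : crossRatio a b c d ≤ lowerGaugeInv (minCrossRatio a b c d) :=
    crossRatio_le_lowerGaugeInv hac had hbc hbd
  have h_nonneg : 0 ≤ crossRatio a b c d := crossRatio_nonneg a b c d
  calc minCrossRatio (f a) (f b) (f c) (f d)
      ≤ upperGauge (crossRatio (f a) (f b) (f c) (f d)) :=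
        minCrossRatio_le_upperGauge (hf_inj.ne had) (hf_inj.ne hbc)
    _ ≤ upperGauge (η (crossRatio a b c d)) :=
        monotone_upperGauge (hf a b c d hab hac had hbc hbd hcd)
    _ ≤ upperGauge (η (lowerGaugeInv (minCrossRatio a b c d))) :=
        monotone_upperGauge (hη h_nonneg (h_nonneg.trans h_cross) h_cross)

theorem relDist_image_le (hf : IsQuasiMobius η f) (hη : MonotoneOn η (Ici 0))
    (hf_cont : Continuous f) (hf_inj : f.Injective) {E F : Set X} (hE : IsCompact E)
    (hE_nt : E.Nontrivial) (hF : IsCompact F) (hF_nt : F.Nontrivial) (hEF : Disjoint E F) :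
    relDist (f '' E) (f '' F) ≤ upperGauge (η (lowerGaugeInv (2 * relDist E F))) := by
  obtain ⟨a, ha, b, hb, c, hc, d, hd, hab, hcd, h_min⟩ :=
    exists_minCrossRatio_le_two_mul_relDist hE hE_nt hF hF_nt
  have h_gauge := isDistortionFunction_lowerGaugeInv
  have h_nonneg : 0 ≤ minCrossRatio a d c b := minCrossRatio_nonneg a d c b
  have h_nonneg' : 0 ≤ 2 * relDist E F := h_nonneg.trans h_min
  calc relDist (f '' E) (f '' F) ≤ minCrossRatio (f a) (f d) (f c) (f b) :=
        relDist_le_minCrossRatio (hE.image hf_cont).isBounded (hF.image hf_cont).isBounded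
          (mem_image_of_mem f ha) (mem_image_of_mem f hb) (mem_image_of_mem f hc)
          (mem_image_of_mem f hd) (hf_inj.ne hab) (hf_inj.ne hcd)
    _ ≤ upperGauge (η (lowerGaugeInv (minCrossRatio a d c b))) :=
        hf.minCrossRatio_le hη hf_inj (hEF.ne_of_mem ha hd) (hEF.ne_of_mem ha hc) hab hcd.symm
          (hEF.ne_of_mem hb hd).symm (hEF.ne_of_mem hb hc).symm
    _ ≤ upperGauge (η (lowerGaugeInv (2 * relDist E F))) :=
        monotone_upperGauge <| hη (h_gauge.mapsTo h_nonneg) (h_gauge.mapsTo h_nonneg') <|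
          h_gauge.2.1.monotoneOn h_nonneg h_nonneg' h_min

end IsQuasiMobius

theorem stmt0_general (η : ℝ → ℝ) (hη : IsDistortionFunction η) :
    ∃ η' : ℝ → ℝ, IsDistortionFunction η' ∧
      ∀ (X : Type u) (Y : Type v) [MetricSpace X] [MetricSpace Y] (f : X → Y),
        Continuous f → f.Injective → IsQuasiMobius η f →
        ∀ E F : Set X, IsCompact E → E.Nontrivial → IsCompact F → F.Nontrivial → Disjoint E F →
          relDist (f '' E) (f '' F) ≤ η' (relDist E F) :=
  ⟨upperGauge ∘ η ∘ lowerGaugeInv ∘ (2 * ·),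
    isDistortionFunction_upperGauge.comp <| hη.comp <|
      isDistortionFunction_lowerGaugeInv.comp <| .const_mul two_pos,
    fun _ _ _ _ _ hf_cont hf_inj hf _ _ hE hE_nt hF hF_nt hEF =>
      hf.relDist_image_le hη.2.1.monotoneOn hf_cont hf_inj hE hE_nt hF hF_nt hEF⟩

/-- For every distortion function `η` there exists a distortion function `η'`
(depending only on `η`) such that for every `η`-quasi-Möbius homeomorphism
`f : X → Y` between metric spaces and every pair of disjoint nondegenerate
continua `E, F ⊆ X` we have `Δ(f(E), f(F)) ≤ η'(Δ(E,F))`. -/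
theorem stmt0 (η : ℝ → ℝ) (hη : IsDistortionFunction η) :
    ∃ η' : ℝ → ℝ, IsDistortionFunction η' ∧
      ∀ (X : Type u) (Y : Type v) [MetricSpace X] [MetricSpace Y] (f : X ≃ₜ Y),
        (∀ a b c d : X, a ≠ b → a ≠ c → a ≠ d → b ≠ c → b ≠ d → c ≠ d →
          crossRatio (f a) (f b) (f c) (f d) ≤ η (crossRatio a b c d)) →
        ∀ E F : Set X,
          IsCompact E → IsConnected E → E.Nontrivial →
          IsCompact F → IsConnected F → F.Nontrivial →
          Disjoint E F →
          relDist (f '' E) (f '' F) ≤ η' (relDist E F) := by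
  obtain ⟨η', hη', h⟩ := stmt0_general.{u, v} η hη
  exact ⟨η', hη', fun X Y _ _ f hf E F hE _ hE_nt hF _ hF_nt hEF =>
    h X Y f f.continuous f.injective hf E F hE hE_nt hF hF_nt hEF⟩
end

section
/- Let (X,d) be a metric space and let {K_i}_{i∈I} be a collection of nonempty compact connected subsets of X. For every annulus A = A(x;r,R) in X there exists a concentric subannulus A' = A(x;r',R') of A with width w_{A'} ≥ min{w_A, w_A^{1/9}} such that one of the following two alternatives holds: (i) there is at most one index i₀ ∈ I such that for every i ∈ I with i ≠ i₀ one has w_{A'}(K_i) ≤ w_{A'}^{1/3} (i.e., the bound w_{A'}(K_i) ≤ w_{A'}^{1/3} holds for all i ∈ I with at most one exception); or (ii) there exist distinct indices i₁, i₂ ∈ I such that each of K_{i₁} and K_{i₂} intersects both boundary spheres {y : d(x,y) = r'} and {y : d(x,y) = R'} of A'. -/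
open Metric Set

/-- The width `w_A(K)` of a set `K` relative to the annulus
`A = A(x;r,R) = {y : r ≤ d(x,y) ≤ R}`, namely `log(R_A(K)/r_A(K))` where
`R_A(K) = sup {d(x,y) : y ∈ A ∩ K}` and `r_A(K) = inf {d(x,y) : y ∈ A ∩ K}`.
(If `A ∩ K = ∅`, then `sSup ∅ = sInf ∅ = 0` in `ℝ` and `log (0/0) = 0`, so the
value is `0`, in accordance with the convention `w_A(K) = 0` in that case.) -/
noncomputable def relWidth {X : Type*} [MetricSpace X] (x : X) (r R : ℝ) (K : Set X) : ℝ :=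
  Real.log
    (sSup ((fun y => dist x y) '' {y ∈ K | r ≤ dist x y ∧ dist x y ≤ R}) /
     sInf ((fun y => dist x y) '' {y ∈ K | r ≤ dist x y ∧ dist x y ≤ R}))

/-!
Let `α = 1 / 3`. If some `K i` is wide in `A`, pass to a subannulus `A₁` of width greater than
`w_A ^ α` which `K i` crosses; if some other `K j` is wide in `A₁`, pass to a subannulus `A₂` of
width greater than `w_{A₁} ^ α ≥ w_A ^ (α ^ 2)` which `K j` crosses. By connectedness `K i` still
crosses `A₂`. Being wide is a strict inequality, so it is witnessed by two points even when the
supremum and infimum in the relative width are not attained.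
-/

theorem log_sSup_div_sInf_le {S : Set ℝ} {c : ℝ} (hc : 0 ≤ c) (hpos : ∀ a ∈ S, 0 < a)
    (hle : ∀ a ∈ S, ∀ b ∈ S, Real.log (b / a) ≤ c) : Real.log (sSup S / sInf S) ≤ c := by
  rcases S.eq_empty_or_nonempty with rfl | hne
  · simpa using hc
  have hle_mul : ∀ a ∈ S, ∀ b ∈ S, b ≤ Real.exp c * a := fun a ha b hb =>
    (div_le_iff₀ (hpos a ha)).1
      ((Real.log_le_iff_le_exp (div_pos (hpos b hb) (hpos a ha))).1 (hle a ha b hb))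
  have hle_mul_sInf : ∀ b ∈ S, b ≤ Real.exp c * sInf S := fun b hb =>
    (div_le_iff₀' (Real.exp_pos c)).1
      (le_csInf hne fun a ha => (div_le_iff₀' (Real.exp_pos c)).2 (hle_mul a ha b hb))
  obtain ⟨b, hb⟩ := hne
  have hsInf : 0 < sInf S :=
    pos_of_mul_pos_right ((hpos b hb).trans_le (hle_mul_sInf b hb)) (Real.exp_pos c).le
  have hsSup : 0 < sSup S := (hpos b hb).trans_le (le_csSup ⟨_, hle_mul_sInf⟩ hb)
  rw [Real.log_le_iff_le_exp (div_pos hsSup hsInf), div_le_iff₀ hsInf]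
  exact csSup_le ⟨b, hb⟩ hle_mul_sInf

theorem min_rpow_le_rpow_of_mem_uIcc {w a b c : ℝ} (hw : 0 < w) (hb : b ∈ uIcc a c) :
    min (w ^ a) (w ^ c) ≤ w ^ b := by
  rcases le_total 1 w with hw1 | hw1
  · rw [← (Real.monotone_rpow_of_base_ge_one hw1).map_min]
    exact Real.rpow_le_rpow_of_exponent_le hw1 hb.1
  · rw [← (Real.antitone_rpow_of_base_le_one hw hw1).map_max]
    exact Real.rpow_le_rpow_of_exponent_ge hw hw1 hb.2

theorem min_self_rpow_sq_le_rpow {w α : ℝ} (hw : 0 < w) (hα : 0 ≤ α) :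
    min w (w ^ (α ^ 2)) ≤ w ^ α := by
  have hmem : α ∈ uIcc 1 (α ^ 2) := by
    rcases le_total 1 α with hα1 | hα1
    · exact mem_uIcc_of_le hα1 (le_self_pow₀ hα1 two_ne_zero)
    · exact mem_uIcc_of_ge (pow_le_of_le_one hα hα1 two_ne_zero) hα1
  simpa only [Real.rpow_one] using min_rpow_le_rpow_of_mem_uIcc hw hmem

theorem inter_sphere_nonempty_of_isPreconnected {X : Type*} [PseudoMetricSpace X] {K : Set X}
    (hK : IsPreconnected K) {x y z : X} (hy : y ∈ K) (hz : z ∈ K) {t : ℝ}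
    (ht : t ∈ Icc (dist x y) (dist x z)) : (K ∩ sphere x t).Nonempty := by
  obtain ⟨u, huK, hut⟩ := hK.intermediate_value hy hz (f := dist x) (by fun_prop) ht
  exact ⟨u, huK, mem_sphere'.2 hut⟩

section

variable {X : Type*} [MetricSpace X] {x : X} {r R c : ℝ} {K : Set X}

theorem exists_lt_log_dist_div_dist_of_lt_relWidth (hr : 0 < r) (hc : 0 ≤ c)
    (h : c < relWidth x r R K) :
    ∃ y ∈ K, ∃ z ∈ K, r ≤ dist x y ∧ dist x z ≤ R ∧ c < Real.log (dist x z / dist x y) := by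
  contrapose! h
  refine log_sSup_div_sInf_le hc ?_ ?_
  · rintro _ ⟨y, ⟨-, hry, -⟩, rfl⟩
    exact hr.trans_le hry
  · rintro _ ⟨y, ⟨hyK, hry, -⟩, rfl⟩ _ ⟨z, ⟨hzK, -, hzR⟩, rfl⟩
    exact h y hyK z hzK hry hzR

theorem exists_crossed_subannulus_of_lt_relWidth (hK : IsPreconnected K) (hr : 0 < r)
    (hc : 0 ≤ c) (h : c < relWidth x r R K) :
    ∃ r' R', r ≤ r' ∧ r' < R' ∧ R' ≤ R ∧ c < Real.log (R' / r') ∧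
      ∀ t ∈ Icc r' R', (K ∩ sphere x t).Nonempty := by
  obtain ⟨y, hy, z, hz, hry, hzR, hlog⟩ := exists_lt_log_dist_div_dist_of_lt_relWidth hr hc h
  have hlt : dist x y < dist x z :=
    (one_lt_div (hr.trans_le hry)).1
      ((Real.log_pos_iff (by positivity)).1 (hc.trans_lt hlog))
  exact ⟨dist x y, dist x z, hry, hlt, hzR, hlog,
    fun _ ht => inter_sphere_nonempty_of_isPreconnected hK hy hz ht⟩

end

theorem stmt3_general {X : Type*} [MetricSpace X] {I : Type*} (K : I → Set X)
    (hK : ∀ i, IsPreconnected (K i)) (x : X) (r R : ℝ) (hr : 0 < r) (hrR : r < R)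
    {α : ℝ} (hα : 0 ≤ α) :
    ∃ r' R' : ℝ, r ≤ r' ∧ r' < R' ∧ R' ≤ R ∧
      min (Real.log (R / r)) (Real.log (R / r) ^ (α ^ 2)) ≤ Real.log (R' / r') ∧
      ((∃ J : Set I, J.Subsingleton ∧
          ∀ i ∉ J, relWidth x r' R' (K i) ≤ Real.log (R' / r') ^ α) ∨
       (∃ i₁ i₂ : I, i₁ ≠ i₂ ∧
          (K i₁ ∩ sphere x r').Nonempty ∧ (K i₁ ∩ sphere x R').Nonempty ∧
          (K i₂ ∩ sphere x r').Nonempty ∧ (K i₂ ∩ sphere x R').Nonempty)) := by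
  set w := Real.log (R / r)
  have hw : 0 < w := Real.log_pos ((one_lt_div hr).2 hrR)
  by_cases hthin : ∀ i, relWidth x r R (K i) ≤ w ^ α
  · exact ⟨r, R, le_rfl, hrR, le_rfl, min_le_left _ _,
      .inl ⟨∅, subsingleton_empty, fun i _ => hthin i⟩⟩
  push Not at hthin
  obtain ⟨i, hi⟩ := hthin
  obtain ⟨r₁, R₁, hr₁, hrR₁, hR₁, hw₁, hcross_i⟩ :=
    exists_crossed_subannulus_of_lt_relWidth (hK i) hr (by positivity) hi
  set w₁ := Real.log (R₁ / r₁)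
  have hw₁_nonneg : 0 ≤ w₁ := (Real.rpow_nonneg hw.le α).trans hw₁.le
  by_cases hthin₁ : ∀ j ≠ i, relWidth x r₁ R₁ (K j) ≤ w₁ ^ α
  · exact ⟨r₁, R₁, hr₁, hrR₁, hR₁, (min_self_rpow_sq_le_rpow hw hα).trans hw₁.le,
      .inl ⟨{i}, subsingleton_singleton, hthin₁⟩⟩
  push Not at hthin₁
  obtain ⟨j, hji, hj⟩ := hthin₁
  obtain ⟨r₂, R₂, hr₂, hrR₂, hR₂, hw₂, hcross_j⟩ :=
    exists_crossed_subannulus_of_lt_relWidth (hK j) (hr.trans_le hr₁) (by positivity) hj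
  have hw_sq : w ^ (α ^ 2) ≤ Real.log (R₂ / r₂) := calc
    w ^ (α ^ 2) = (w ^ α) ^ α := by rw [← Real.rpow_mul hw.le, sq]
    _ ≤ w₁ ^ α := by gcongr
    _ ≤ Real.log (R₂ / r₂) := hw₂.le
  exact ⟨r₂, R₂, hr₁.trans hr₂, hrR₂, hR₂.trans hR₁, min_le_of_right_le hw_sq,
    .inr ⟨i, j, hji.symm, hcross_i r₂ ⟨hr₂, hrR₂.le.trans hR₂⟩,
      hcross_i R₂ ⟨hr₂.trans hrR₂.le, hR₂⟩, hcross_j r₂ (left_mem_Icc.2 hrR₂.le),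
      hcross_j R₂ (right_mem_Icc.2 hrR₂.le)⟩⟩

/-- Given a collection of nonempty compact connected sets `K i` in a metric space
and an annulus `A = A(x;r,R)`, there is a concentric subannulus `A' = A(x;r',R')`
of width `w_{A'} ≥ min{w_A, w_A^{1/9}}` such that either (i) `w_{A'}(K i) ≤ w_{A'}^{1/3}`
for all `i` with at most one exception, or (ii) two of the sets `K i` intersect
both boundary spheres of `A'`. -/
theorem stmt3 {X : Type*} [MetricSpace X] {I : Type*} (K : I → Set X)
    (hK : ∀ i, IsCompact (K i) ∧ IsConnected (K i))
    (x : X) (r R : ℝ) (hr : 0 < r) (hrR : r < R)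
    (hext : ∃ y : X, R < dist x y) :
    ∃ r' R' : ℝ, r ≤ r' ∧ r' < R' ∧ R' ≤ R ∧
      min (Real.log (R / r)) (Real.log (R / r) ^ (1 / 9 : ℝ)) ≤ Real.log (R' / r') ∧
      ((∃ J : Set I, J.Subsingleton ∧
          ∀ i ∉ J, relWidth x r' R' (K i) ≤ Real.log (R' / r') ^ (1 / 3 : ℝ)) ∨
       (∃ i₁ i₂ : I, i₁ ≠ i₂ ∧
          (K i₁ ∩ sphere x r').Nonempty ∧ (K i₁ ∩ sphere x R').Nonempty ∧
          (K i₂ ∩ sphere x r').Nonempty ∧ (K i₂ ∩ sphere x R').Nonempty)) := by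
  rw [show (1 / 9 : ℝ) = (1 / 3) ^ 2 by norm_num]
  exact stmt3_general K (fun i => (hK i).2.isPreconnected) x r R hr hrR (by norm_num)
end
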